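/- arXiv:2106.03760 — 5 statements merged into one kernel-verified Lean document; each statement's English description precedes it below -/
import Mathlib

section
/- (Proposition 2, second part) For every positive integers m and k, every real γ > 0, every α ∈ ℝ^k, and every matrix Z ∈ ℝ^{k×m} with rows z^{(1)},…,z^{(k)}, the DSelect-k gate output q̃(α,Z) = ∑_{i=1}^k σ(α)_i · r(S(z^{(i)})) ∈ ℝ^{2^m} belongs to the probability simplex: all its entries are nonnegative and they sum to 1. -/
/-- The single expert selector: for `i : Fin (2^m)` (0-indexed, corresponding to the
paper's 1-indexed expert `i+1`), `r(z)_i = ∏_{j ∈ B(i)} z_j · ∏_{j ∉ B(i)} (1 - z_j)`,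
where `B(i)` is the set of (0-indexed) nonzero bits of `i`. -/
def selector (m : ℕ) (z : Fin m → ℝ) (i : Fin (2 ^ m)) : ℝ :=
  ∏ j : Fin m, if Nat.testBit i.val j.val then z j else 1 - z j

/-- The smooth-step function with scaling parameter `γ`. -/
noncomputable def smoothStep (γ : ℝ) (t : ℝ) : ℝ :=
  if t ≤ -γ / 2 then 0
  else if γ / 2 ≤ t then 1
  else -(2 / γ ^ 3) * t ^ 3 + 3 / (2 * γ) * t + 1 / 2

/-- The softmax function `σ(α)_i = exp(α_i) / ∑_j exp(α_j)`. -/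
noncomputable def softmax {k : ℕ} (α : Fin k → ℝ) (i : Fin k) : ℝ :=
  Real.exp (α i) / ∑ j : Fin k, Real.exp (α j)

/-- The DSelect-k gate `q̃(α, Z) = ∑_i σ(α)_i · r(S(z^(i)))`. -/
noncomputable def dselect (m k : ℕ) (γ : ℝ) (α : Fin k → ℝ) (Z : Fin k → Fin m → ℝ)
    (i : Fin (2 ^ m)) : ℝ :=
  ∑ t : Fin k, softmax α t * selector m (fun j => smoothStep γ (Z t j)) i

/-!
Reading off the bits of an index identifies `Fin (2 ^ m)` with `Fin m → Bool`, so the entries of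
`r(z)` are the terms in the expansion of `∏ j, (z j + (1 - z j)) = 1`. They are nonnegative once
`z` lies in the unit cube, which is where the smooth step takes its values. The gate is then a
convex combination of points of the simplex, with the softmax weights.
-/

lemma testBit_fin_two_pow_bijective (m : ℕ) :
    Function.Bijective fun (i : Fin (2 ^ m)) (j : Fin m) => i.val.testBit j := by
  refine (Fintype.bijective_iff_injective_and_card _).2 ⟨fun a b hab => ?_, by simp⟩
  refine Fin.ext (Nat.eq_of_testBit_eq fun j => ?_)
  rcases lt_or_ge j m with hj | hj
  · exact congrFun hab ⟨j, hj⟩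
  · have high_bit (i : Fin (2 ^ m)) : i.val.testBit j = false :=
      Nat.testBit_lt_two_pow (i.isLt.trans_le (Nat.pow_le_pow_right two_pos hj))
    rw [high_bit, high_bit]

lemma sum_prod_testBit {R : Type*} [CommSemiring R] (m : ℕ) (f g : Fin m → R) :
    ∑ i : Fin (2 ^ m), ∏ j : Fin m, (if i.val.testBit j then f j else g j) = ∏ j, (f j + g j) :=
  calc
    _ = ∑ b : Fin m → Bool, ∏ j, (if b j then f j else g j) :=
      (testBit_fin_two_pow_bijective m).sum_comp fun b => ∏ j, if b j then f j else g j
    _ = ∏ j, ∑ b : Bool, (if b then f j else g j) :=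
      (Fintype.prod_sum fun j (b : Bool) => if b then f j else g j).symm
    _ = ∏ j, (f j + g j) := by
      simp only [Fintype.sum_bool, if_true, Bool.false_eq_true, if_false]

lemma sum_selector (m : ℕ) (z : Fin m → ℝ) : ∑ i, selector m z i = 1 := by
  simp only [selector, sum_prod_testBit, add_sub_cancel, Finset.prod_const_one]

lemma selector_nonneg {m : ℕ} {z : Fin m → ℝ} (hz : ∀ j, z j ∈ Set.Icc 0 1) (i : Fin (2 ^ m)) :
    0 ≤ selector m z i := by
  refine Finset.prod_nonneg fun j _ => ?_
  split_ifs
  · exact (hz j).1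
  · exact sub_nonneg.2 (hz j).2

lemma selector_mem_stdSimplex {m : ℕ} {z : Fin m → ℝ} (hz : ∀ j, z j ∈ Set.Icc 0 1) :
    selector m z ∈ stdSimplex ℝ (Fin (2 ^ m)) :=
  ⟨selector_nonneg hz, sum_selector m z⟩

lemma smoothStep_mem_Icc (γ t : ℝ) : smoothStep γ t ∈ Set.Icc 0 1 := by
  unfold smoothStep
  split_ifs with h_low h_high
  · exact Set.left_mem_Icc.2 zero_le_one
  · exact Set.right_mem_Icc.2 zero_le_one
  · rw [not_le] at h_low h_high
    have hγ : 0 < γ := by linarith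
    have h_lower : -1 ≤ t / γ := by rw [le_div_iff₀ hγ]; linarith
    have h_upper : t / γ ≤ 1 := by rw [div_le_one hγ]; linarith
    -- The cubic has double contact with the levels `0` and `1` at the endpoints `∓γ / 2`.
    have cubic_eq : -(2 / γ ^ 3) * t ^ 3 + 3 / (2 * γ) * t + 1 / 2
        = 2 * (t / γ + 1 / 2) ^ 2 * (1 - t / γ) := by
      field_simp
      ring
    have one_sub_cubic_eq : 1 - (-(2 / γ ^ 3) * t ^ 3 + 3 / (2 * γ) * t + 1 / 2)
        = 2 * (t / γ - 1 / 2) ^ 2 * (1 + t / γ) := by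
      field_simp
      ring
    constructor
    · rw [cubic_eq]
      exact mul_nonneg (by positivity) (by linarith)
    · rw [← sub_nonneg, one_sub_cubic_eq]
      exact mul_nonneg (by positivity) (by linarith)

lemma softmax_mem_stdSimplex {k : ℕ} [NeZero k] (α : Fin k → ℝ) :
    softmax α ∈ stdSimplex ℝ (Fin k) := by
  have sum_exp_pos : 0 < ∑ j, Real.exp (α j) :=
    Finset.sum_pos (fun j _ => Real.exp_pos (α j)) Finset.univ_nonempty
  refine ⟨fun i => div_nonneg (Real.exp_pos _).le sum_exp_pos.le, ?_⟩
  simp only [softmax]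
  rw [← Finset.sum_div, div_self sum_exp_pos.ne']

lemma dselect_eq_sum_smul (m k : ℕ) (γ : ℝ) (α : Fin k → ℝ) (Z : Fin k → Fin m → ℝ) :
    dselect m k γ α Z = ∑ t, softmax α t • selector m (fun j => smoothStep γ (Z t j)) := by
  ext i
  simp only [dselect, Finset.sum_apply, Pi.smul_apply, smul_eq_mul]

/-- Proposition 2, second part: for `m, k ≥ 1`, `γ > 0`, any `α : ℝ^k`
and any matrix `Z : ℝ^(k×m)`, the DSelect-k gate output `q̃(α, Z)` belongs to the
probability simplex. -/
theorem dselect_mem_simplex (m k : ℕ) (hm : 0 < m) (hk : 0 < k) (γ : ℝ) (hγ : 0 < γ)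
    (α : Fin k → ℝ) (Z : Fin k → Fin m → ℝ) :
    (∀ i : Fin (2 ^ m), 0 ≤ dselect m k γ α Z i) ∧
    ∑ i : Fin (2 ^ m), dselect m k γ α Z i = 1 := by
  have : NeZero k := ⟨hk.ne'⟩
  obtain ⟨weight_nonneg, sum_weight⟩ := softmax_mem_stdSimplex α
  change dselect m k γ α Z ∈ stdSimplex ℝ (Fin (2 ^ m))
  rw [dselect_eq_sum_smul]
  exact (convex_stdSimplex ℝ _).sum_mem (fun t _ => weight_nonneg t) sum_weight
    fun t _ => selector_mem_stdSimplex fun j => smoothStep_mem_Icc γ (Z t j)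
end

section
/- (Reverse direction of Proposition 1) Let m and k be positive integers and set n = 2^m. For every vector w ∈ ℝ^n in the probability simplex with at most k nonzero entries (‖w‖₀ ≤ k), there exist α ∈ ℝ^k and binary vectors z^{(1)},…,z^{(k)} ∈ {0,1}^m such that q(α,Z) = ∑_{i=1}^k σ(α)_i · r(z^{(i)}) = w. -/
/-- The combinatorial gate `q(α, Z) = ∑_{i=1}^k σ(α)_i · r(z^{(i)})`. -/
noncomputable def gate (m k : ℕ) (α : Fin k → ℝ) (Z : Fin k → Fin m → ℝ)
    (i : Fin (2 ^ m)) : ℝ :=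
  ∑ t : Fin k, softmax α t * selector m (Z t) i

/-- `‖w‖₀`: the number of nonzero entries of `w`. -/
noncomputable def norm0 {n : ℕ} (w : Fin n → ℝ) : ℕ :=
  (Finset.univ.filter fun i => w i ≠ 0).card

/-!
The selector at a binary code is the standard basis vector at the index with these bits, so a gate
with binary codes is the pushforward of its softmax weights along the map sending a slot to the
index it encodes. Softmax weights never vanish, so a slot that the support of `w` does not need
cannot be switched off: let the slots map onto the support, possibly with repetitions, and split
each nonzero entry of `w` evenly over its fiber. The resulting weights are positive and sum to `1`,
hence they are the softmax of their logarithms.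
-/

lemma softmax_log {k : ℕ} {β : Fin k → ℝ} (hβ : ∀ t, 0 < β t) (t : Fin k) :
    softmax (fun s => Real.log (β s)) t = β t / ∑ s, β s := by
  simp only [softmax, Real.exp_log (hβ _)]

section BinaryCode

variable {m : ℕ}

/-- The binary code `z ∈ {0,1}^m` of an expert index, least significant bit first. It is the code
at which the selector picks out that expert. -/
def binaryCode (a : Fin (2 ^ m)) (j : Fin m) : ℝ :=
  if Nat.testBit a.val j.val then 1 else 0

lemma binaryCode_eq_zero_or_one (a : Fin (2 ^ m)) (j : Fin m) :
    binaryCode a j = 0 ∨ binaryCode a j = 1 :=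
  (ite_eq_or_eq _ _ _).symm

lemma testBit_injective :
    Function.Injective fun (a : Fin (2 ^ m)) (j : Fin m) => Nat.testBit a.val j.val := by
  intro a b hab
  have hmod : a.val % 2 ^ m = b.val % 2 ^ m := by
    simpa only [Nat.ofBits_testBit] using congrArg Nat.ofBits hab
  rwa [Nat.mod_eq_of_lt a.isLt, Nat.mod_eq_of_lt b.isLt, ← Fin.ext_iff] at hmod

lemma selector_binaryCode (a i : Fin (2 ^ m)) :
    selector m (binaryCode a) i = if a = i then 1 else 0 := by
  have hfactor (j : Fin m) :
      (if Nat.testBit i.val j.val then binaryCode a j else 1 - binaryCode a j) =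
        if Nat.testBit a.val j.val = Nat.testBit i.val j.val then 1 else 0 := by
    cases hi : Nat.testBit i.val j.val <;> cases ha : Nat.testBit a.val j.val <;>
      simp [binaryCode, ha]
  have hbits : (∀ j : Fin m, Nat.testBit a.val j.val = Nat.testBit i.val j.val) ↔ a = i :=
    funext_iff.symm.trans testBit_injective.eq_iff
  simp only [selector, hfactor, Finset.prod_ite_zero, Finset.mem_univ, true_imp_iff, hbits,
    Finset.prod_const_one]

lemma gate_binaryCode {k : ℕ} (α : Fin k → ℝ) (f : Fin k → Fin (2 ^ m)) (i : Fin (2 ^ m)) :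
    gate m k α (fun t => binaryCode (f t)) i = ∑ t with f t = i, softmax α t := by
  simp only [gate, selector_binaryCode, mul_ite, mul_one, mul_zero, Finset.sum_filter]

end BinaryCode

section FiberShare

variable {ι κ K : Type*} [Fintype ι]

lemma exists_range_eq_of_card_le {S : Finset κ} (hS : S.Nonempty)
    (hcard : S.card ≤ Fintype.card ι) : ∃ f : ι → κ, Set.range f = S := by
  have : Nonempty S := hS.to_subtype
  obtain ⟨g⟩ : Nonempty (S ↪ ι) :=
    Function.Embedding.nonempty_of_card_le (by rwa [Fintype.card_coe])
  refine ⟨Subtype.val ∘ Function.invFun g, ?_⟩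
  rw [(Function.invFun_surjective g.injective).range_comp, Subtype.range_coe]

variable [DecidableEq κ] [Semifield K]

/-- The weight at `t` when each entry `w i` is split evenly over the fiber of `f` above `i`. It
turns a vector on `κ` into weights on `ι` that are positive wherever `w ∘ f` is. -/
def fiberShare (f : ι → κ) (w : κ → K) (t : ι) : K :=
  w (f t) / (Finset.univ.filter fun s => f s = f t).card

lemma sum_fiberShare_fiber [CharZero K] {f : ι → κ} {w : κ → K}
    (hf : Function.support w ⊆ Set.range f) (i : κ) :
    ∑ t with f t = i, fiberShare f w t = w i := by
  have hconst : ∀ t ∈ Finset.univ.filter (f · = i),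
      fiberShare f w t = w i / (Finset.univ.filter (f · = i)).card := by
    intro t ht
    rw [fiberShare, (Finset.mem_filter.mp ht).2]
  rw [Finset.sum_eq_card_nsmul hconst, nsmul_eq_mul]
  refine mul_div_cancel_of_imp' fun hempty => ?_
  by_contra hi
  obtain ⟨t, ht⟩ := hf hi
  have hfiber : Finset.univ.filter (f · = i) = ∅ :=
    Finset.card_eq_zero.mp (Nat.cast_eq_zero.mp hempty)
  exact Finset.filter_eq_empty_iff.mp hfiber (Finset.mem_univ t) ht

variable [LinearOrder K] [IsStrictOrderedRing K]

lemma fiberShare_pos {f : ι → κ} {w : κ → K} {t : ι} (ht : 0 < w (f t)) :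
    0 < fiberShare f w t :=
  div_pos ht (Nat.cast_pos.mpr (Finset.card_pos.mpr ⟨t, by simp⟩))

lemma exists_pos_sum_fiber_eq [Fintype κ] {w : κ → K} (hnonneg : ∀ i, 0 ≤ w i) (hne : w ≠ 0)
    (hcard : (Finset.univ.filter fun i => w i ≠ 0).card ≤ Fintype.card ι) :
    ∃ (f : ι → κ) (β : ι → K), (∀ t, 0 < β t) ∧ ∀ i, ∑ t with f t = i, β t = w i := by
  obtain ⟨i, hi⟩ := Function.ne_iff.mp hne
  obtain ⟨f, hf⟩ := exists_range_eq_of_card_le ⟨i, by simpa using hi⟩ hcard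
  have hrange : Set.range f = Function.support w := hf.trans (Finset.coe_filter_univ _)
  have hpos (t : ι) : 0 < w (f t) :=
    (hnonneg _).lt_of_ne' (hrange.subset (Set.mem_range_self t))
  exact ⟨f, fiberShare f w, fun t => fiberShare_pos (hpos t), sum_fiberShare_fiber hrange.superset⟩

end FiberShare

/-- reverse direction of Proposition 1: every vector `w` in the
probability simplex of `ℝ^(2^m)` with at most `k` nonzero entries can be written as
`q(α, Z)` for some `α : ℝ^k` and binary codes `z^(1), …, z^(k) ∈ {0,1}^m`. -/
theorem gate_binary_realizes_sparse_simplex (m k : ℕ) (hm : 0 < m) (hk : 0 < k)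
    (w : Fin (2 ^ m) → ℝ) (hw0 : ∀ i, 0 ≤ w i) (hw1 : ∑ i : Fin (2 ^ m), w i = 1)
    (hws : norm0 w ≤ k) :
    ∃ (α : Fin k → ℝ) (Z : Fin k → Fin m → ℝ),
      (∀ i j, Z i j = 0 ∨ Z i j = 1) ∧ gate m k α Z = w := by
  have hne : w ≠ 0 := by
    rintro rfl
    simp at hw1
  obtain ⟨f, β, hβ, hfiber⟩ :=
    exists_pos_sum_fiber_eq (ι := Fin k) hw0 hne (hws.trans_eq (Fintype.card_fin k).symm)
  have hsum : ∑ t, β t = 1 := by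
    rw [← hw1, ← Finset.sum_fiberwise Finset.univ f β]
    exact Finset.sum_congr rfl fun i _ => hfiber i
  refine ⟨fun t => Real.log (β t), fun t => binaryCode (f t),
    fun t => binaryCode_eq_zero_or_one (f t), funext fun i => ?_⟩
  simp only [gate_binaryCode, softmax_log hβ, hsum, div_one, hfiber]
end

section
/- (Image characterization underlying Proposition 1) Let m and k be positive integers and set n = 2^m. The image of the combinatorial gate over unconstrained weights and binary codes equals the set of k-sparse probability vectors: { q(α,Z) : α ∈ ℝ^k, Z ∈ {0,1}^{k×m} } = { w ∈ ℝ^n : w is in the probability simplex and ‖w‖₀ ≤ k }. -/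
section BinaryCodes

variable {m : ℕ}

/-- The `{0,1}`-valued code of the index `a`: its binary digits, the least significant one at
position `0`, so that `selector` singles out `a` among all indices. -/
def bitCode (a : Fin (2 ^ m)) (j : Fin m) : ℝ :=
  if a.val.testBit j then 1 else 0

theorem testBit_fin_two_pow_injective :
    Function.Injective fun (a : Fin (2 ^ m)) (j : Fin m) ↦ a.val.testBit j := by
  intro a b hab
  ext
  calc a.val = Nat.ofBits fun j : Fin m ↦ a.val.testBit j := by
        rw [Nat.ofBits_testBit, Nat.mod_eq_of_lt a.isLt]
    _ = Nat.ofBits fun j : Fin m ↦ b.val.testBit j := congrArg Nat.ofBits hab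
    _ = b.val := by rw [Nat.ofBits_testBit, Nat.mod_eq_of_lt b.isLt]

theorem range_bitCode :
    Set.range (bitCode (m := m)) = {z | ∀ j, z j = 0 ∨ z j = 1} := by
  ext z
  constructor
  · rintro ⟨a, rfl⟩ j
    exact (ite_eq_or_eq _ _ _).symm
  · intro hz
    refine ⟨Fin.ofBits fun j ↦ decide (z j = 1), funext fun j ↦ ?_⟩
    rcases hz j with h | h <;> simp [bitCode, h]

theorem selector_bitCode (a : Fin (2 ^ m)) : selector m (bitCode a) = Pi.single a 1 := by
  ext i
  have factor_eq (j : Fin m) : (if i.val.testBit j then bitCode a j else 1 - bitCode a j) =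
      if i.val.testBit j = a.val.testBit j then 1 else 0 := by
    cases hi : i.val.testBit j <;> cases ha : a.val.testBit j <;> simp [bitCode, ha]
  have bits_eq_iff : (∀ j : Fin m, i.val.testBit j = a.val.testBit j) ↔ i = a :=
    funext_iff.symm.trans testBit_fin_two_pow_injective.eq_iff
  simp only [selector, factor_eq, Fintype.prod_boole, bits_eq_iff, Pi.single_apply]

theorem gate_bitCode {k : ℕ} (α : Fin k → ℝ) (f : Fin k → Fin (2 ^ m)) :
    gate m k α (fun t ↦ bitCode (f t)) = FunOnFinite.map f (softmax α) := by
  ext i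
  simp [gate, selector_bitCode, Pi.single_apply, FunOnFinite.map_apply_apply, Finset.sum_filter,
    eq_comm]

theorem exists_binary_gate_eq_iff {k : ℕ} (w : Fin (2 ^ m) → ℝ) :
    (∃ (α : Fin k → ℝ) (Z : Fin k → Fin m → ℝ),
        (∀ i j, Z i j = 0 ∨ Z i j = 1) ∧ gate m k α Z = w) ↔
      ∃ f : Fin k → Fin (2 ^ m), ∃ v ∈ Set.range softmax, FunOnFinite.map f v = w := by
  constructor
  · rintro ⟨α, Z, hZ, rfl⟩
    choose f hf using fun t ↦ range_bitCode.ge (hZ t)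
    obtain rfl : (fun t ↦ bitCode (f t)) = Z := funext hf
    exact ⟨f, softmax α, ⟨α, rfl⟩, (gate_bitCode α f).symm⟩
  · rintro ⟨f, _, ⟨α, rfl⟩, rfl⟩
    exact ⟨α, fun t ↦ bitCode (f t), fun t ↦ range_bitCode.le ⟨f t, rfl⟩, gate_bitCode α f⟩

end BinaryCodes

theorem range_softmax {k : ℕ} (hk : 0 < k) :
    Set.range (softmax (k := k)) = {v | v ∈ stdSimplex ℝ (Fin k) ∧ ∀ t, 0 < v t} := by
  ext v
  constructor
  · rintro ⟨α, rfl⟩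
    have sum_exp_pos : 0 < ∑ t, Real.exp (α t) :=
      Finset.sum_pos (fun t _ ↦ Real.exp_pos (α t)) ⟨⟨0, hk⟩, Finset.mem_univ _⟩
    have softmax_pos (t : Fin k) : 0 < softmax α t := div_pos (Real.exp_pos _) sum_exp_pos
    refine ⟨⟨fun t ↦ (softmax_pos t).le, ?_⟩, softmax_pos⟩
    simp only [softmax, ← Finset.sum_div, div_self sum_exp_pos.ne']
  · rintro ⟨⟨-, hsum⟩, hpos⟩
    refine ⟨fun t ↦ Real.log (v t), funext fun t ↦ ?_⟩
    simp only [softmax, Real.exp_log (hpos _), hsum, div_one]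

theorem norm0_eq_ncard_support {n : ℕ} (w : Fin n → ℝ) :
    norm0 w = (Function.support w).ncard := by
  simp [norm0, ← Set.ncard_coe_finset, Function.support]

section Pushforward

variable {X Y : Type*}

theorem exists_range_eq_of_ncard_le [Fintype X] {S : Set Y} (hfin : S.Finite) (hne : S.Nonempty)
    (hcard : S.ncard ≤ Fintype.card X) : ∃ f : X → Y, Set.range f = S := by
  have := hfin.fintype
  have := hne.to_subtype
  have embedding : Nonempty (S ↪ X) := Function.Embedding.nonempty_of_card_le <| by
    rwa [← Nat.card_eq_fintype_card, Nat.card_coe_set_eq]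
  obtain ⟨g, hg⟩ : ∃ g : X → S, Function.Surjective g :=
    Function.exists_surjective_iff.mpr ⟨inferInstance, embedding⟩
  exact ⟨fun x ↦ g x, by rw [← Function.comp_def, hg.range_comp, Subtype.range_coe]⟩

theorem sum_funOnFinite_map [Fintype X] [Fintype Y] {M : Type*} [AddCommMonoid M]
    (f : X → Y) (v : X → M) :
    ∑ y, FunOnFinite.map f v y = ∑ x, v x := by
  classical
  simp only [FunOnFinite.map_apply_apply]
  exact Finset.sum_fiberwise Finset.univ f v

theorem support_funOnFinite_map_subset_range [Finite X] [Finite Y] {M : Type*}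
    [AddCommMonoid M] (f : X → Y) (v : X → M) :
    Function.support (FunOnFinite.map f v) ⊆ Set.range f := by
  classical
  have := Fintype.ofFinite X
  intro y hy
  rw [Function.mem_support, FunOnFinite.map_apply_apply] at hy
  obtain ⟨x, hx, -⟩ := Finset.exists_ne_zero_of_sum_ne_zero hy
  exact ⟨x, (Finset.mem_filter.mp hx).2⟩

variable {K : Type*} [Field K] [LinearOrder K] [IsStrictOrderedRing K]

theorem exists_pos_map_eq_of_range_eq_support [Finite X] [Finite Y] {f : X → Y} {w : Y → K}
    (hw : ∀ y, 0 ≤ w y) (hf : Set.range f = Function.support w) :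
    ∃ v : X → K, (∀ x, 0 < v x) ∧ FunOnFinite.map f v = w := by
  classical
  have := Fintype.ofFinite X
  let fiber (y : Y) : Finset X := {x | f x = y}
  have fiber_card_pos (x : X) : (0 : K) < (fiber (f x)).card :=
    Nat.cast_pos.mpr (Finset.card_pos.mpr ⟨x, by simp [fiber]⟩)
  refine ⟨fun x ↦ w (f x) / (fiber (f x)).card, fun x ↦ ?_, funext fun y ↦ ?_⟩
  · exact div_pos ((hw _).lt_of_ne' (hf.le ⟨x, rfl⟩)) (fiber_card_pos x)
  · calc FunOnFinite.map f (fun x ↦ w (f x) / (fiber (f x)).card) y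
        = ∑ x ∈ fiber y, w (f x) / (fiber (f x)).card := FunOnFinite.map_apply_apply ..
      _ = ∑ _x ∈ fiber y, w y / (fiber y).card :=
        Finset.sum_congr rfl fun x hx ↦ by rw [(Finset.mem_filter.mp hx).2]
      _ = (fiber y).card * (w y / (fiber y).card) := by rw [Finset.sum_const, nsmul_eq_mul]
      _ = w y := by
        by_cases hy : w y = 0
        · rw [hy, zero_div, mul_zero]
        · obtain ⟨x, rfl⟩ := hf.ge hy
          exact mul_div_cancel₀ _ (fiber_card_pos x).ne'

theorem exists_pos_stdSimplex_map_eq_iff [Fintype X] [Fintype Y] (w : Y → K) :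
    (∃ f : X → Y, ∃ v ∈ {v | v ∈ stdSimplex K X ∧ ∀ x, 0 < v x}, FunOnFinite.map f v = w) ↔
      w ∈ stdSimplex K Y ∧ (Function.support w).ncard ≤ Fintype.card X := by
  constructor
  · rintro ⟨f, v, ⟨hv, -⟩, rfl⟩
    refine ⟨stdSimplex.image_linearMap f ⟨v, hv, rfl⟩, ?_⟩
    calc (Function.support (FunOnFinite.map f v)).ncard
        ≤ (Set.range f).ncard := Set.ncard_le_ncard (support_funOnFinite_map_subset_range f v)
      _ ≤ Fintype.card X := by
        rw [← Nat.card_coe_set_eq, ← Nat.card_eq_fintype_card]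
        exact Finite.card_range_le f
  · rintro ⟨⟨hnonneg, hsum⟩, hcard⟩
    have support_nonempty : (Function.support w).Nonempty := by
      rw [Function.support_nonempty_iff]
      rintro rfl
      simp at hsum
    obtain ⟨f, hf⟩ := exists_range_eq_of_ncard_le (Set.toFinite _) support_nonempty hcard
    obtain ⟨v, hpos, rfl⟩ := exists_pos_map_eq_of_range_eq_support hnonneg hf
    exact ⟨f, v, ⟨⟨fun x ↦ (hpos x).le, (sum_funOnFinite_map f v).symm.trans hsum⟩, hpos⟩, rfl⟩

end Pushforward

/-- image characterization underlying Proposition 1: the image of the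
combinatorial gate over unconstrained weights and binary codes equals the set of
`k`-sparse probability vectors in `ℝ^(2^m)`. -/
theorem gate_image_eq_sparse_simplex (m k : ℕ) (hm : 0 < m) (hk : 0 < k) :
    {w : Fin (2 ^ m) → ℝ |
        ∃ (α : Fin k → ℝ) (Z : Fin k → Fin m → ℝ),
          (∀ i j, Z i j = 0 ∨ Z i j = 1) ∧ gate m k α Z = w} =
      {w : Fin (2 ^ m) → ℝ |
        (∀ i, 0 ≤ w i) ∧ ∑ i : Fin (2 ^ m), w i = 1 ∧ norm0 w ≤ k} := by
  ext w
  simp only [Set.mem_ofPred_eq]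
  rw [exists_binary_gate_eq_iff, range_softmax hk, exists_pos_stdSimplex_map_eq_iff,
    ← norm0_eq_ncard_support, Fintype.card_fin]
  exact and_assoc
end

section
/- (Proposition 1, optimization form) Let m and k be positive integers, set n = 2^m, and let L : ℝ^n → ℝ be any function (representing the empirical loss of the mixture-of-experts model as a function of the expert weight vector). Then the infimum of L(w) over all w in the probability simplex of ℝ^n with ‖w‖₀ ≤ k equals the infimum of L(q(α,Z)) over all α ∈ ℝ^k and binary matrices Z ∈ {0,1}^{k×m}; moreover, w* attains the first infimum if and only if there exist α, Z with q(α,Z) = w* attaining the second. -/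
theorem exists_image_univ_eq {ι κ : Type*} [Fintype κ] [DecidableEq ι] {s : Finset ι}
    (hs : s.Nonempty) (hcard : s.card ≤ Fintype.card κ) :
    ∃ c : κ → ι, Finset.univ.image c = s := by
  have : Nonempty s := hs.to_subtype
  have hemb : Nonempty (s ↪ κ) := Function.Embedding.nonempty_of_card_le (by simpa using hcard)
  obtain ⟨c, hc⟩ := Function.exists_surjective_iff.2 ⟨⟨fun _ => Classical.arbitrary s⟩, hemb⟩
  refine ⟨fun t => c t, Finset.ext fun i => ?_⟩
  simp only [Finset.mem_image, Finset.mem_univ, true_and]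
  exact ⟨fun ⟨t, ht⟩ => ht ▸ (c t).2, fun hi => (hc ⟨i, hi⟩).imp fun t ht => congrArg _ ht⟩

section Pushforward

open FunOnFinite

variable {ι κ : Type*} [Fintype ι] [Fintype κ]

theorem sum_funOnFinite_map_s9 {M : Type*} [AddCommMonoid M] (c : κ → ι) (p : κ → M) :
    ∑ i, map c p i = ∑ t, p t := by
  classical
  simp only [map_apply_apply]
  exact Finset.sum_fiberwise _ _ _

theorem support_funOnFinite_map {M : Type*} [AddCommMonoid M] [PartialOrder M]
    [IsOrderedAddMonoid M] [DecidableEq M] [DecidableEq ι] (c : κ → ι) {p : κ → M}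
    (hp : ∀ t, 0 < p t) :
    (Finset.univ.filter fun i => map c p i ≠ 0) = Finset.univ.image c := by
  ext i
  have hsum : ∑ t with c t = i, p t ≠ 0 ↔ ∃ t, c t = i := by
    rw [ne_eq, Finset.sum_eq_zero_iff_of_nonneg fun t _ => (hp t).le]
    simp [(hp _).ne']
  simpa [map_apply_apply] using hsum

variable {K : Type*} [Semifield K] [LinearOrder K] [IsStrictOrderedRing K]

theorem exists_pos_funOnFinite_map_eq [DecidableEq ι] (c : κ → ι) {w : ι → K} (hw : ∀ i, 0 ≤ w i)
    (hc : Finset.univ.image c = Finset.univ.filter fun i => w i ≠ 0) :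
    ∃ p : κ → K, (∀ t, 0 < p t) ∧ map c p = w := by
  let fibre (i : ι) : Finset κ := Finset.univ.filter fun t => c t = i
  have hc_iff (i : ι) : (∃ t, c t = i) ↔ w i ≠ 0 := by simpa using Finset.ext_iff.1 hc i
  have fibre_card_pos (t : κ) : (0 : K) < (fibre (c t)).card :=
    Nat.cast_pos.2 (Finset.card_pos.2 ⟨t, by simp [fibre]⟩)
  refine ⟨fun t => w (c t) / (fibre (c t)).card, fun t => ?_, funext fun i => ?_⟩
  · exact div_pos ((hw _).lt_of_ne' ((hc_iff _).1 ⟨t, rfl⟩)) (fibre_card_pos t)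
  · have hsum : map c (fun t => w (c t) / (fibre (c t)).card) i =
        (fibre i).card * (w i / (fibre i).card) := by
      rw [map_apply_apply, ← nsmul_eq_mul]
      exact Finset.sum_eq_card_nsmul fun t ht => by rw [(Finset.mem_filter.1 ht).2]
    rw [hsum]
    by_cases hi : w i = 0
    · simp [hi]
    · obtain ⟨t, rfl⟩ := (hc_iff i).2 hi
      exact mul_div_cancel₀ _ (fibre_card_pos t).ne'

theorem mem_stdSimplex_and_card_support_le_iff {w : ι → K} :
    (w ∈ stdSimplex K ι ∧ (Finset.univ.filter fun i => w i ≠ 0).card ≤ Fintype.card κ) ↔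
      ∃ (c : κ → ι) (p : κ → K), (p ∈ stdSimplex K κ ∧ ∀ t, 0 < p t) ∧ map c p = w := by
  classical
  constructor
  · rintro ⟨⟨hw, hsum⟩, hcard⟩
    have hsupp : (Finset.univ.filter fun i => w i ≠ 0).Nonempty := by
      obtain ⟨i, -, hi⟩ := Finset.exists_ne_zero_of_sum_ne_zero (hsum.trans_ne one_ne_zero)
      exact ⟨i, by simpa using hi⟩
    obtain ⟨c, hc⟩ := exists_image_univ_eq hsupp hcard
    obtain ⟨p, hp, rfl⟩ := exists_pos_funOnFinite_map_eq c hw hc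
    rw [sum_funOnFinite_map_s9] at hsum
    exact ⟨c, p, ⟨⟨fun t => (hp t).le, hsum⟩, hp⟩, rfl⟩
  · rintro ⟨c, p, ⟨hp, hpos⟩, rfl⟩
    refine ⟨stdSimplex.image_linearMap c ⟨p, hp, rfl⟩, ?_⟩
    rw [support_funOnFinite_map c hpos]
    exact Finset.card_image_le

end Pushforward

theorem exists_softmax_eq_iff {k : ℕ} (hk : 0 < k) {p : Fin k → ℝ} :
    (∃ α, softmax α = p) ↔ p ∈ stdSimplex ℝ (Fin k) ∧ ∀ t, 0 < p t := by
  constructor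
  · rintro ⟨α, rfl⟩
    have hsum : 0 < ∑ j, Real.exp (α j) :=
      Finset.sum_pos (fun j _ => Real.exp_pos _) ⟨⟨0, hk⟩, Finset.mem_univ _⟩
    have hpos (t : Fin k) : 0 < softmax α t := div_pos (Real.exp_pos _) hsum
    refine ⟨⟨fun t => (hpos t).le, ?_⟩, hpos⟩
    simp only [softmax, ← Finset.sum_div]
    exact div_self hsum.ne'
  · rintro ⟨⟨-, hsum⟩, hpos⟩
    refine ⟨fun t => Real.log (p t), funext fun t => ?_⟩
    simp only [softmax, Real.exp_log (hpos _), hsum, div_one]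

/-- The binary expansion of the expert index `c` as a 0/1 vector, least significant bit first:
the row of `Z` that selects expert `c`. -/
def bitVector {m : ℕ} (c : Fin (2 ^ m)) (j : Fin m) : ℝ :=
  if Nat.testBit c.val j.val then 1 else 0

theorem forall_testBit_eq_iff {m : ℕ} {i c : Fin (2 ^ m)} :
    (∀ j : Fin m, Nat.testBit i.val j.val = Nat.testBit c.val j.val) ↔ i = c := by
  refine ⟨fun h => Fin.ext ?_, fun h j => by rw [h]⟩
  calc i.val = Nat.ofBits fun j : Fin m => Nat.testBit i.val j.val := by
        rw [Nat.ofBits_testBit, Nat.mod_eq_of_lt i.isLt]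
    _ = Nat.ofBits fun j : Fin m => Nat.testBit c.val j.val := by rw [funext h]
    _ = c.val := by rw [Nat.ofBits_testBit, Nat.mod_eq_of_lt c.isLt]

theorem exists_bitVector_eq_iff {m : ℕ} {z : Fin m → ℝ} :
    (∃ c, bitVector c = z) ↔ ∀ j, z j = 0 ∨ z j = 1 := by
  classical
  constructor
  · rintro ⟨c, rfl⟩ j
    exact (ite_eq_or_eq _ _ _).symm
  · intro hz
    refine ⟨Fin.ofBits fun j => decide (z j = 1), funext fun j => ?_⟩
    rcases hz j with h | h <;> simp [bitVector, h]

theorem selector_bitVector {m : ℕ} (c : Fin (2 ^ m)) :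
    selector m (bitVector c) = Pi.single c 1 := by
  funext i
  have hfactor (j : Fin m) :
      (if Nat.testBit i.val j.val then bitVector c j else 1 - bitVector c j) =
        if Nat.testBit i.val j.val = Nat.testBit c.val j.val then 1 else 0 := by
    cases hi : Nat.testBit i.val j.val <;> cases hc : Nat.testBit c.val j.val <;>
      simp [bitVector, hc]
  simp only [selector, hfactor, Fintype.prod_ite_zero, Finset.prod_const_one,
    forall_testBit_eq_iff, Pi.single_apply]

theorem gate_bitVector {m k : ℕ} (α : Fin k → ℝ) (c : Fin k → Fin (2 ^ m)) :
    gate m k α (fun t => bitVector (c t)) = FunOnFinite.map c (softmax α) := by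
  funext i
  simp only [gate, selector_bitVector, Pi.single_apply, mul_ite, mul_one, mul_zero,
    FunOnFinite.map_apply_apply, Finset.sum_filter, eq_comm]

theorem exists_gate_eq_iff_exists_map_softmax_eq {m k : ℕ} {w : Fin (2 ^ m) → ℝ} :
    (∃ (α : Fin k → ℝ) (Z : Fin k → Fin m → ℝ),
        (∀ i j, Z i j = 0 ∨ Z i j = 1) ∧ gate m k α Z = w) ↔
      ∃ (α : Fin k → ℝ) (c : Fin k → Fin (2 ^ m)), FunOnFinite.map c (softmax α) = w := by
  simp only [← gate_bitVector]
  constructor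
  · rintro ⟨α, Z, hZ, hw⟩
    choose c hc using fun t => exists_bitVector_eq_iff.2 (hZ t)
    exact ⟨α, c, by rwa [funext hc]⟩
  · rintro ⟨α, c, hw⟩
    exact ⟨α, _, fun t => exists_bitVector_eq_iff.1 ⟨c t, rfl⟩, hw⟩

theorem exists_gate_eq_iff {m k : ℕ} (hk : 0 < k) {w : Fin (2 ^ m) → ℝ} :
    (∃ (α : Fin k → ℝ) (Z : Fin k → Fin m → ℝ),
        (∀ i j, Z i j = 0 ∨ Z i j = 1) ∧ gate m k α Z = w) ↔
      (∀ i, 0 ≤ w i) ∧ ∑ i, w i = 1 ∧ norm0 w ≤ k :=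
  calc (∃ (α : Fin k → ℝ) (Z : Fin k → Fin m → ℝ),
        (∀ i j, Z i j = 0 ∨ Z i j = 1) ∧ gate m k α Z = w)
    _ ↔ ∃ (α : Fin k → ℝ) (c : Fin k → Fin (2 ^ m)), FunOnFinite.map c (softmax α) = w :=
        exists_gate_eq_iff_exists_map_softmax_eq
    _ ↔ ∃ (c : Fin k → Fin (2 ^ m)) (p : Fin k → ℝ),
          (p ∈ stdSimplex ℝ (Fin k) ∧ ∀ t, 0 < p t) ∧ FunOnFinite.map c p = w := by
        simp only [← exists_softmax_eq_iff hk, exists_exists_eq_and]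
        exact exists_comm
    _ ↔ w ∈ stdSimplex ℝ (Fin (2 ^ m)) ∧ norm0 w ≤ k := by
        rw [← mem_stdSimplex_and_card_support_le_iff, Fintype.card_fin, norm0]
    _ ↔ (∀ i, 0 ≤ w i) ∧ ∑ i, w i = 1 ∧ norm0 w ≤ k := and_assoc

theorem gate_optimization_equivalence_general {β : Type*} [ConditionallyCompleteLattice β]
    (m k : ℕ) (hk : 0 < k) (L : (Fin (2 ^ m) → ℝ) → β) :
    sInf {y : β | ∃ w : Fin (2 ^ m) → ℝ,
        ((∀ i, 0 ≤ w i) ∧ ∑ i : Fin (2 ^ m), w i = 1 ∧ norm0 w ≤ k) ∧ y = L w} =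
      sInf {y : β | ∃ (α : Fin k → ℝ) (Z : Fin k → Fin m → ℝ),
        (∀ i j, Z i j = 0 ∨ Z i j = 1) ∧ y = L (gate m k α Z)} ∧
    ∀ w : Fin (2 ^ m) → ℝ,
      (((∀ i, 0 ≤ w i) ∧ ∑ i : Fin (2 ^ m), w i = 1 ∧ norm0 w ≤ k) ∧
        (∀ w' : Fin (2 ^ m) → ℝ,
          ((∀ i, 0 ≤ w' i) ∧ ∑ i : Fin (2 ^ m), w' i = 1 ∧ norm0 w' ≤ k) →
            L w ≤ L w')) ↔
      (∃ (α : Fin k → ℝ) (Z : Fin k → Fin m → ℝ),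
        (∀ i j, Z i j = 0 ∨ Z i j = 1) ∧ gate m k α Z = w ∧
        ∀ (α' : Fin k → ℝ) (Z' : Fin k → Fin m → ℝ),
          (∀ i j, Z' i j = 0 ∨ Z' i j = 1) →
            L (gate m k α Z) ≤ L (gate m k α' Z')) := by
  simp only [← exists_gate_eq_iff hk]
  refine ⟨congrArg sInf (Set.ext fun y => ⟨?_, ?_⟩), fun w => ⟨?_, ?_⟩⟩
  · rintro ⟨_, ⟨α, Z, hZ, rfl⟩, rfl⟩
    exact ⟨α, Z, hZ, rfl⟩
  · rintro ⟨α, Z, hZ, rfl⟩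
    exact ⟨_, ⟨α, Z, hZ, rfl⟩, rfl⟩
  · rintro ⟨⟨α, Z, hZ, rfl⟩, hmin⟩
    exact ⟨α, Z, hZ, rfl, fun α' Z' hZ' => hmin _ ⟨α', Z', hZ', rfl⟩⟩
  · rintro ⟨α, Z, hZ, rfl, hmin⟩
    exact ⟨⟨α, Z, hZ, rfl⟩, fun _ ⟨α', Z', hZ', hw'⟩ => hw' ▸ hmin α' Z' hZ'⟩

/-- Proposition 1, optimization form: for any loss `L : ℝ^(2^m) → ℝ`,
the infimum of `L` over `k`-sparse probability vectors equals the infimum of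
`L ∘ q` over unconstrained weights and binary codes; moreover, `w` attains the first
infimum iff some `(α, Z)` with `q(α, Z) = w` attains the second. -/
theorem gate_optimization_equivalence (m k : ℕ) (hm : 0 < m) (hk : 0 < k)
    (L : (Fin (2 ^ m) → ℝ) → ℝ) :
    sInf {y : ℝ | ∃ w : Fin (2 ^ m) → ℝ,
        ((∀ i, 0 ≤ w i) ∧ ∑ i : Fin (2 ^ m), w i = 1 ∧ norm0 w ≤ k) ∧ y = L w} =
      sInf {y : ℝ | ∃ (α : Fin k → ℝ) (Z : Fin k → Fin m → ℝ),
        (∀ i j, Z i j = 0 ∨ Z i j = 1) ∧ y = L (gate m k α Z)} ∧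
    ∀ w : Fin (2 ^ m) → ℝ,
      (((∀ i, 0 ≤ w i) ∧ ∑ i : Fin (2 ^ m), w i = 1 ∧ norm0 w ≤ k) ∧
        (∀ w' : Fin (2 ^ m) → ℝ,
          ((∀ i, 0 ≤ w' i) ∧ ∑ i : Fin (2 ^ m), w' i = 1 ∧ norm0 w' ≤ k) →
            L w ≤ L w')) ↔
      (∃ (α : Fin k → ℝ) (Z : Fin k → Fin m → ℝ),
        (∀ i j, Z i j = 0 ∨ Z i j = 1) ∧ gate m k α Z = w ∧
        ∀ (α' : Fin k → ℝ) (Z' : Fin k → Fin m → ℝ),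
          (∀ i j, Z' i j = 0 ∨ Z' i j = 1) →
            L (gate m k α Z) ≤ L (gate m k α' Z')) :=
  gate_optimization_equivalence_general m k hk L
end

section
/- (Continuous differentiability of the DSelect-k gate) For every positive integers m, k and every γ > 0, the map (α, Z) ↦ q̃(α,Z) = ∑_{i=1}^k σ(α)_i · r(S(z^{(i)})), viewed as a function from ℝ^k × ℝ^{k×m} to ℝ^{2^m}, is continuously differentiable (of class C¹). -/
/-!
Only the smooth-step `S` is not obviously smooth: the softmax is a quotient of smooth functions
with positive denominator, and the selector is polynomial in its arguments.

`S` is a cubic spline whose middle piece meets the constants `0` and `1` with zero derivative.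
Expanding it in truncated powers at its two knots, the constant and linear terms therefore cancel
and only squares and cubes of positive parts remain, while `x ↦ (x⁺) ^ (n + 1)` is `Cⁿ`.
-/

lemma hasDerivAt_posPart_pow (n : ℕ) (x : ℝ) :
    HasDerivAt (fun y : ℝ => y⁺ ^ (n + 2)) ((n + 2) * x⁺ ^ (n + 1)) x := by
  -- By continuity of both sides, the origin needs no separate computation.
  refine hasDerivAt_of_hasDerivAt_of_ne' (x := 0) (g := fun y : ℝ => (n + 2) * y⁺ ^ (n + 1))
    (fun y hy => ?_) (by fun_prop) (by fun_prop) x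
  rcases hy.lt_or_gt with hneg | hpos
  · have h_eq : (fun z : ℝ => z⁺ ^ (n + 2)) =ᶠ[nhds y] fun _ => 0 := by
      filter_upwards [Iio_mem_nhds hneg] with z hz
      rw [posPart_of_nonpos (Set.mem_Iio.1 hz).le, zero_pow (by lia)]
    simpa [posPart_of_nonpos hneg.le] using
      (hasDerivAt_const y (0 : ℝ)).congr_of_eventuallyEq h_eq
  · have h_eq : (fun z : ℝ => z⁺ ^ (n + 2)) =ᶠ[nhds y] fun z => z ^ (n + 2) := by
      filter_upwards [Ioi_mem_nhds hpos] with z hz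
      rw [posPart_of_nonneg (Set.mem_Ioi.1 hz).le]
    simpa [posPart_of_nonneg hpos.le] using
      (hasDerivAt_pow (n + 2) y).congr_of_eventuallyEq h_eq

lemma contDiff_posPart_pow (n : ℕ) : ContDiff ℝ n (fun x : ℝ => x⁺ ^ (n + 1)) := by
  induction n with
  | zero => exact contDiff_zero.2 (by fun_prop)
  | succ n ih =>
    have h_deriv : deriv (fun x : ℝ => x⁺ ^ (n + 2)) =
        fun x : ℝ => (n + 2) * x⁺ ^ (n + 1) :=
      funext fun x => (hasDerivAt_posPart_pow n x).deriv
    rw [Nat.cast_succ, contDiff_succ_iff_deriv, h_deriv]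
    exact ⟨fun x => (hasDerivAt_posPart_pow n x).differentiableAt, by simp,
      contDiff_const.mul ih⟩

lemma smoothStep_eq_smoothStep_one_div {γ : ℝ} (hγ : 0 < γ) (t : ℝ) :
    smoothStep γ t = smoothStep 1 (t / γ) := by
  have h_left : t / γ ≤ -1 / 2 ↔ t ≤ -γ / 2 := by
    rw [div_le_iff₀ hγ, show -1 / 2 * γ = -γ / 2 by ring]
  have h_right : 1 / 2 ≤ t / γ ↔ γ / 2 ≤ t := by
    rw [le_div_iff₀ hγ, show 1 / 2 * γ = γ / 2 by ring]
  have h_cubic : -(2 / γ ^ 3) * t ^ 3 + 3 / (2 * γ) * t + 1 / 2 =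
      -(2 / 1 ^ 3) * (t / γ) ^ 3 + 3 / (2 * 1) * (t / γ) + 1 / 2 := by
    field_simp
  simp only [smoothStep, h_left, h_right, h_cubic]

lemma smoothStep_one_eq_posPart (x : ℝ) :
    smoothStep 1 x = 3 * (x + 1 / 2)⁺ ^ 2 - 2 * (x + 1 / 2)⁺ ^ 3 +
      3 * (x - 1 / 2)⁺ ^ 2 + 2 * (x - 1 / 2)⁺ ^ 3 := by
  unfold smoothStep
  split_ifs with h_left h_right
  · rw [posPart_of_nonpos (by linarith : x + 1 / 2 ≤ 0),
      posPart_of_nonpos (by linarith : x - 1 / 2 ≤ 0)]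
    ring
  · rw [posPart_of_nonneg (by linarith : 0 ≤ x + 1 / 2),
      posPart_of_nonneg (by linarith : 0 ≤ x - 1 / 2)]
    ring
  · rw [posPart_of_nonneg (by linarith : 0 ≤ x + 1 / 2),
      posPart_of_nonpos (by linarith : x - 1 / 2 ≤ 0)]
    ring

lemma contDiff_smoothStep {γ : ℝ} (hγ : 0 < γ) : ContDiff ℝ 1 (smoothStep γ) := by
  have h_sq : ContDiff ℝ 1 (fun x : ℝ => x⁺ ^ 2) := mod_cast contDiff_posPart_pow 1
  have h_cube : ContDiff ℝ 1 (fun x : ℝ => x⁺ ^ 3) :=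
    (contDiff_posPart_pow 2).of_le (by norm_num)
  have h_one : ContDiff ℝ 1 (smoothStep 1) := by
    have h_add : ContDiff ℝ 1 fun x : ℝ => x + 1 / 2 := by fun_prop
    have h_sub : ContDiff ℝ 1 fun x : ℝ => x - 1 / 2 := by fun_prop
    rw [funext smoothStep_one_eq_posPart]
    exact (((contDiff_const.mul (h_sq.comp h_add)).sub (contDiff_const.mul (h_cube.comp h_add))).add
      (contDiff_const.mul (h_sq.comp h_sub))).add (contDiff_const.mul (h_cube.comp h_sub))
  rw [funext (smoothStep_eq_smoothStep_one_div hγ)]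
  fun_prop

lemma contDiff_softmax {k : ℕ} {n : WithTop ℕ∞} (i : Fin k) :
    ContDiff ℝ n (fun α : Fin k → ℝ => softmax α i) := by
  have h_pos (α : Fin k → ℝ) : 0 < ∑ j, Real.exp (α j) :=
    Finset.sum_pos (fun j _ => Real.exp_pos (α j)) ⟨i, Finset.mem_univ i⟩
  exact ContDiff.div (by fun_prop) (by fun_prop) fun α => (h_pos α).ne'

lemma contDiff_selector {m : ℕ} {n : WithTop ℕ∞} (i : Fin (2 ^ m)) :
    ContDiff ℝ n (fun z : Fin m → ℝ => selector m z i) := by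
  refine contDiff_prod fun j _ => ?_
  split_ifs <;> fun_prop

/-- continuous differentiability of the DSelect-k gate: for `m, k ≥ 1`
and `γ > 0`, the map `(α, Z) ↦ q̃(α, Z)`, from `ℝ^k × ℝ^(k×m)` to `ℝ^(2^m)`, is
continuously differentiable. -/
theorem dselect_contDiff (m k : ℕ) (hm : 0 < m) (hk : 0 < k) (γ : ℝ) (hγ : 0 < γ) :
    ContDiff ℝ 1 (fun p : (Fin k → ℝ) × (Fin k → Fin m → ℝ) =>
      fun i : Fin (2 ^ m) => dselect m k γ p.1 p.2 i) := by
  refine contDiff_pi.2 fun i => ContDiff.sum fun t _ => ?_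
  have h_softmax : ContDiff ℝ 1 fun p : (Fin k → ℝ) × (Fin k → Fin m → ℝ) => softmax p.1 t :=
    (contDiff_softmax t).comp contDiff_fst
  have h_smoothStep : ContDiff ℝ 1 fun p : (Fin k → ℝ) × (Fin k → Fin m → ℝ) =>
      fun j => smoothStep γ (p.2 t j) :=
    contDiff_pi.2 fun j => (contDiff_smoothStep hγ).comp (by fun_prop)
  exact h_softmax.mul ((contDiff_selector i).comp h_smoothStep)
end
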